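/- arXiv:1702.00547 — 2 statements merged into one kernel-verified Lean document; each statement's English description precedes it below -/
import Mathlib

section
/- Let A1 ∈ ℍ^{m×p1}, A2 ∈ ℍ^{m×p2}, B1 ∈ ℍ^{q×n1}, B2 ∈ ℍ^{q×n2}, C1 ∈ ℍ^{m×n1}, C2 ∈ ℍ^{m×n2} be quaternion matrices, and define D1 = R_{B1} B2, A = R_{A2} A1, B = B2 L_{D1}, C = R_{A2} (R_{A1} C1 B1⁺ B2 − C2) L_{D1}. Assume R_{A1} C1 L_{B1} = 0, R_A C = 0 and C L_B = 0. Then quaternion matrices (X, Y, Z) of sizes p1×n1, m×q, p2×n2 satisfy A1 X − Y B1 = C1 and A2 Z − Y B2 = C2 if and only if there exist quaternion matrices W1, W2, W3, W4, W5, W6 of appropriate sizes such that, setting U1 = A⁺ C B⁺ + L_A W2 + W3 R_B and V1 = −R_{A2} (C2 − R_{A1} C1 B1⁺ B2 + A1 U1 B2) D1⁺ + A2 W4 + W5 R_{D1}, one has X = A1⁺ C1 + U1 B1 + L_{A1} W1, Y = −R_{A1} C1 B1⁺ + A1 U1 + V1 R_{B1}, and Z = A2⁺ (C2 − R_{A1}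 C1 B1⁺ B2 + A1 U1 B2) + W4 D1 + L_{A2} W6. -/
open Matrix

noncomputable section

/-- `Mat a b` is the type of `a × b` matrices over the real quaternions. -/
abbrev Mat (a b : ℕ) := Matrix (Fin a) (Fin b) (Quaternion ℝ)

/-- `Ad` is a Moore–Penrose inverse of `A`: the four Penrose equations hold. -/
def IsMPInv {k l : Type*} [Fintype k] [Fintype l]
    (A : Matrix k l (Quaternion ℝ)) (Ad : Matrix l k (Quaternion ℝ)) : Prop :=
  A * Ad * A = A ∧ Ad * A * Ad = Ad ∧ (A * Ad)ᴴ = A * Ad ∧ (Ad * A)ᴴ = Ad * A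

/-- The projector `L_A = I - A⁺ A`. -/
def Lp {k l : Type*} [Fintype k] [Fintype l] [DecidableEq l]
    (A : Matrix k l (Quaternion ℝ)) (Ad : Matrix l k (Quaternion ℝ)) :
    Matrix l l (Quaternion ℝ) :=
  1 - Ad * A

/-- The projector `R_A = I - A A⁺`. -/
def Rp {k l : Type*} [Fintype k] [Fintype l] [DecidableEq k]
    (A : Matrix k l (Quaternion ℝ)) (Ad : Matrix l k (Quaternion ℝ)) :
    Matrix k k (Quaternion ℝ) :=
  1 - A * Ad

/-!
Both equations are of Sylvester type `A X - Y B = C`. Substituting the general solution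
`X = A₁⁺ C₁ + U B₁ + L_{A₁} W`, `Y = -R_{A₁} C₁ B₁⁺ + A₁ U + V R_{B₁}` of the first into the second
leaves the Sylvester equation `A₂ Z - V D₁ = C₂ - R_{A₁} C₁ B₁⁺ B₂ + A₁ U B₂` in `(Z, V)`, which is
solvable exactly when `A U B = C`. Solving the latter for `U`, and then the former for `(Z, V)`,
gives all solutions.
-/

section GeneralizedInverse

variable {R k l n o : Type*} [Ring R]

/-- `G` is an inner inverse (also called a `{1}`-inverse) of `A`: the first of the four Penrose
equations holds. -/
def IsInnerInverse [Fintype k] [Fintype l] (A : Matrix k l R) (G : Matrix l k R) : Prop :=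
  A * G * A = A

/-- The matrix `L_A = 1 - A⁻ A`. When `G` is an inner inverse `A⁻` of `A`, it is an idempotent
spanning the right annihilator of `A`. -/
def rightAnnProj [Fintype k] [DecidableEq l] (A : Matrix k l R) (G : Matrix l k R) :
    Matrix l l R :=
  1 - G * A

/-- The matrix `R_A = 1 - A A⁻`. When `G` is an inner inverse `A⁻` of `A`, it is an idempotent
spanning the left annihilator of `A`. -/
def leftAnnProj [Fintype l] [DecidableEq k] (A : Matrix k l R) (G : Matrix l k R) :
    Matrix k k R :=
  1 - A * G

theorem IsMPInv.isInnerInverse [Fintype k] [Fintype l] {A : Matrix k l (Quaternion ℝ)}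
    {G : Matrix l k (Quaternion ℝ)} (h : IsMPInv A G) : IsInnerInverse A G :=
  h.1

section Projectors

variable [Fintype k] [Fintype l] {A : Matrix k l R} {G : Matrix l k R}

theorem IsInnerInverse.mul_rightAnnProj [DecidableEq l] (hG : IsInnerInverse A G) :
    A * rightAnnProj A G = 0 := by
  rw [rightAnnProj, Matrix.mul_sub, Matrix.mul_one, ← Matrix.mul_assoc, hG, sub_self]

theorem IsInnerInverse.leftAnnProj_mul [DecidableEq k] (hG : IsInnerInverse A G) :
    leftAnnProj A G * A = 0 := by
  rw [leftAnnProj, Matrix.sub_mul, Matrix.one_mul, hG, sub_self]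

theorem rightAnnProj_mul [DecidableEq l] (A : Matrix k l R) (G : Matrix l k R)
    (X : Matrix l n R) : rightAnnProj A G * X = X - G * (A * X) := by
  rw [rightAnnProj, Matrix.sub_mul, Matrix.one_mul, Matrix.mul_assoc]

theorem mul_rightAnnProj [DecidableEq l] (A : Matrix k l R) (G : Matrix l k R)
    (X : Matrix n l R) : X * rightAnnProj A G = X - X * G * A := by
  rw [rightAnnProj, Matrix.mul_sub, Matrix.mul_one, Matrix.mul_assoc]

theorem leftAnnProj_mul [DecidableEq k] (A : Matrix k l R) (G : Matrix l k R)
    (X : Matrix k n R) : leftAnnProj A G * X = X - A * (G * X) := by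
  rw [leftAnnProj, Matrix.sub_mul, Matrix.one_mul, Matrix.mul_assoc]

theorem mul_leftAnnProj [DecidableEq k] (A : Matrix k l R) (G : Matrix l k R)
    (X : Matrix n k R) : X * leftAnnProj A G = X - X * A * G := by
  rw [leftAnnProj, Matrix.mul_sub, Matrix.mul_one, Matrix.mul_assoc]

end Projectors

section LinearEquations

variable [Fintype k] [Fintype l] [Fintype n] [Fintype o] [DecidableEq l] [DecidableEq n]
  {A : Matrix k l R} {A' : Matrix l k R} {B : Matrix n o R} {B' : Matrix o n R}

theorem mul_mul_eq_zero_iff_exists (hA : IsInnerInverse A A') (hB : IsInnerInverse B B')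
    {X : Matrix l n R} :
    A * X * B = 0 ↔ ∃ V W : Matrix l n R, X = rightAnnProj A A' * V + W * leftAnnProj B B' := by
  constructor
  · intro h
    refine ⟨X, A' * (A * X), ?_⟩
    rw [rightAnnProj_mul, mul_leftAnnProj, Matrix.mul_assoc A', h, Matrix.mul_zero, Matrix.zero_mul,
      sub_zero, sub_add_cancel]
  · rintro ⟨V, W, rfl⟩
    rw [Matrix.mul_add, ← Matrix.mul_assoc, hA.mul_rightAnnProj, Matrix.zero_mul, zero_add,
      Matrix.mul_assoc, Matrix.mul_assoc, hB.leftAnnProj_mul, Matrix.mul_zero, Matrix.mul_zero]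

theorem mul_eq_mul_iff_exists (hA : IsInnerInverse A A') (hB : IsInnerInverse B B')
    {X : Matrix l o R} {Y : Matrix k n R} :
    A * X = Y * B ↔ ∃ (U : Matrix l n R) (V : Matrix k n R) (W : Matrix l o R),
      X = U * B + rightAnnProj A A' * W ∧ Y = A * U + V * leftAnnProj B B' := by
  constructor
  · intro h
    refine ⟨X * B', Y, X - X * B' * B, ?_, ?_⟩
    · have hW : A * (X - X * B' * B) = 0 := by
        rw [Matrix.mul_sub, ← Matrix.mul_assoc, ← Matrix.mul_assoc, h, Matrix.mul_assoc Y,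
          Matrix.mul_assoc Y, hB, sub_self]
      rw [rightAnnProj_mul, hW, Matrix.mul_zero, sub_zero, add_sub_cancel]
    · rw [mul_leftAnnProj, ← h, Matrix.mul_assoc, add_sub_cancel]
  · rintro ⟨U, V, W, rfl, rfl⟩
    rw [Matrix.mul_add, Matrix.add_mul, ← Matrix.mul_assoc A (rightAnnProj A A'),
      hA.mul_rightAnnProj, Matrix.mul_assoc V, hB.leftAnnProj_mul, Matrix.zero_mul, Matrix.mul_zero,
      Matrix.mul_assoc]

variable [DecidableEq k] [DecidableEq o]

theorem mul_mul_eq_iff_exists (hA : IsInnerInverse A A') (hB : IsInnerInverse B B')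
    {C : Matrix k o R} {X : Matrix l n R} :
    A * X * B = C ↔ leftAnnProj A A' * C = 0 ∧ C * rightAnnProj B B' = 0 ∧
      ∃ V W : Matrix l n R,
        X = A' * C * B' + rightAnnProj A A' * V + W * leftAnnProj B B' := by
  have consistent (h : A * X * B = C) :
      leftAnnProj A A' * C = 0 ∧ C * rightAnnProj B B' = 0 := by
    rw [← h, Matrix.mul_assoc (A * X), hB.mul_rightAnnProj, Matrix.mul_assoc A,
      ← Matrix.mul_assoc _ A, hA.leftAnnProj_mul, Matrix.zero_mul, Matrix.mul_zero]
    exact ⟨rfl, rfl⟩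
  have particular (hL : leftAnnProj A A' * C = 0) (hR : C * rightAnnProj B B' = 0) :
      A * (A' * C * B') * B = C := by
    rw [leftAnnProj_mul, sub_eq_zero] at hL
    rw [mul_rightAnnProj, sub_eq_zero] at hR
    rw [Matrix.mul_assoc A', ← Matrix.mul_assoc A, Matrix.mul_assoc, ← hR, Matrix.mul_assoc, ← hL]
  rw [← and_assoc, ← and_iff_right_of_imp consistent]
  refine and_congr_right fun ⟨hL, hR⟩ => ?_
  have homogeneous : A * X * B = C ↔ A * (X - A' * C * B') * B = 0 := by
    rw [Matrix.mul_sub, Matrix.sub_mul, particular hL hR, sub_eq_zero]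
  simp only [homogeneous, mul_mul_eq_zero_iff_exists hA hB, sub_eq_iff_eq_add', add_assoc]

theorem mul_sub_mul_eq_iff_exists (hA : IsInnerInverse A A') (hB : IsInnerInverse B B')
    {C : Matrix k o R} {X : Matrix l o R} {Y : Matrix k n R} :
    A * X - Y * B = C ↔ leftAnnProj A A' * C * rightAnnProj B B' = 0 ∧
      ∃ (U : Matrix l n R) (V : Matrix k n R) (W : Matrix l o R),
        X = A' * C + U * B + rightAnnProj A A' * W ∧
          Y = -(leftAnnProj A A' * C * B') + A * U + V * leftAnnProj B B' := by
  have consistent (h : A * X - Y * B = C) :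
      leftAnnProj A A' * C * rightAnnProj B B' = 0 := by
    rw [← h, Matrix.mul_sub, Matrix.sub_mul, ← Matrix.mul_assoc _ A, hA.leftAnnProj_mul,
      Matrix.mul_assoc (_ : Matrix k k R) (Y * B), Matrix.mul_assoc Y, hB.mul_rightAnnProj]
    simp only [Matrix.zero_mul, Matrix.mul_zero, sub_self]
  have particular (hC : leftAnnProj A A' * C * rightAnnProj B B' = 0) :
      A * (A' * C) - -(leftAnnProj A A' * C * B') * B = C := by
    rw [mul_rightAnnProj, sub_eq_zero] at hC
    rw [Matrix.neg_mul, sub_neg_eq_add, ← hC, leftAnnProj_mul, add_sub_cancel]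
  rw [← and_iff_right_of_imp consistent]
  refine and_congr_right fun hC => ?_
  have homogeneous : A * X - Y * B = C ↔
      A * (X - A' * C) = (Y - -(leftAnnProj A A' * C * B')) * B := by
    conv_lhs => rw [← particular hC]
    rw [Matrix.mul_sub, Matrix.sub_mul, sub_eq_sub_iff_sub_eq_sub]
  simp only [homogeneous, mul_eq_mul_iff_exists hA hB, sub_eq_iff_eq_add', add_assoc]

end LinearEquations

section Substitution

variable {p₁ p₂ r : Type*} [Fintype n] [Fintype p₁] {A₁ : Matrix k p₁ R} {B₂ : Matrix n o R}
  {C₂ : Matrix k o R} {P : Matrix k n R} {U : Matrix p₁ n R}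

theorem mul_sub_mul_eq_iff_of_eq [Fintype p₂] {A₂ : Matrix k p₂ R} {E : Matrix n n R}
    {V Y : Matrix k n R} {Z : Matrix p₂ o R} (hY : Y = -P + A₁ * U + V * E) :
    A₂ * Z - Y * B₂ = C₂ ↔ A₂ * Z - V * (E * B₂) = C₂ - P * B₂ + A₁ * U * B₂ := by
  rw [← sub_eq_zero, ← sub_eq_zero (a := A₂ * Z - V * (E * B₂))]
  simp only [hY, Matrix.add_mul, Matrix.neg_mul, Matrix.mul_assoc]
  congr! 1
  abel

theorem mul_sub_add_mul_eq_zero_iff [Fintype k] [Fintype o] {E : Matrix l k R}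
    {F : Matrix o r R} :
    E * (C₂ - P * B₂ + A₁ * U * B₂) * F = 0 ↔
      E * A₁ * U * (B₂ * F) = E * (P * B₂ - C₂) * F := by
  rw [← sub_eq_zero (a := E * A₁ * U * (B₂ * F))]
  simp only [Matrix.mul_add, Matrix.add_mul, Matrix.mul_sub, Matrix.sub_mul, Matrix.mul_assoc]
  congr! 1
  abel

end Substitution

theorem stmt_1_general {m p1 p2 q n1 n2 : Type*} [Fintype m] [Fintype p1] [Fintype p2] [Fintype q]
    [Fintype n1] [Fintype n2] [DecidableEq m] [DecidableEq p1] [DecidableEq p2] [DecidableEq q]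
    [DecidableEq n1] [DecidableEq n2]
    {A1 : Matrix m p1 R} {A1d : Matrix p1 m R} (hA1 : IsInnerInverse A1 A1d)
    {A2 : Matrix m p2 R} {A2d : Matrix p2 m R} (hA2 : IsInnerInverse A2 A2d)
    {B1 : Matrix q n1 R} {B1d : Matrix n1 q R} (hB1 : IsInnerInverse B1 B1d)
    {B2 : Matrix q n2 R} {C1 : Matrix m n1 R} {C2 : Matrix m n2 R}
    {D1 : Matrix q n2 R} (hD1 : D1 = leftAnnProj B1 B1d * B2)
    {D1d : Matrix n2 q R} (hD1d : IsInnerInverse D1 D1d)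
    {A : Matrix m p1 R} (hA : A = leftAnnProj A2 A2d * A1)
    {Ad : Matrix p1 m R} (hAd : IsInnerInverse A Ad)
    {B : Matrix q n2 R} (hB : B = B2 * rightAnnProj D1 D1d)
    {Bd : Matrix n2 q R} (hBd : IsInnerInverse B Bd)
    {C : Matrix m n2 R}
    (hC : C = leftAnnProj A2 A2d * (leftAnnProj A1 A1d * C1 * B1d * B2 - C2) * rightAnnProj D1 D1d)
    {X : Matrix p1 n1 R} {Y : Matrix m q R} {Z : Matrix p2 n2 R} :
    (A1 * X - Y * B1 = C1 ∧ A2 * Z - Y * B2 = C2) ↔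
      (leftAnnProj A1 A1d * C1 * rightAnnProj B1 B1d = 0 ∧ leftAnnProj A Ad * C = 0 ∧
        C * rightAnnProj B Bd = 0) ∧
      ∃ (W1 : Matrix p1 n1 R) (W2 : Matrix p1 q R) (W3 : Matrix p1 q R) (W4 : Matrix p2 q R)
          (W5 : Matrix m q R) (W6 : Matrix p2 n2 R) (U1 : Matrix p1 q R) (V1 : Matrix m q R),
        U1 = Ad * C * Bd + rightAnnProj A Ad * W2 + W3 * leftAnnProj B Bd ∧
        V1 = -(leftAnnProj A2 A2d *
                (C2 - leftAnnProj A1 A1d * C1 * B1d * B2 + A1 * U1 * B2) * D1d)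
              + A2 * W4 + W5 * leftAnnProj D1 D1d ∧
        X = A1d * C1 + U1 * B1 + rightAnnProj A1 A1d * W1 ∧
        Y = -(leftAnnProj A1 A1d * C1 * B1d) + A1 * U1 + V1 * leftAnnProj B1 B1d ∧
        Z = A2d * (C2 - leftAnnProj A1 A1d * C1 * B1d * B2 + A1 * U1 * B2)
              + W4 * D1 + rightAnnProj A2 A2d * W6 := by
  have solvable_iff (U : Matrix p1 q R) :
      leftAnnProj A2 A2d * (C2 - leftAnnProj A1 A1d * C1 * B1d * B2 + A1 * U * B2) *
        rightAnnProj D1 D1d = 0 ↔ A * U * B = C := by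
    rw [hA, hB, hC, mul_sub_add_mul_eq_zero_iff]
  constructor
  · rintro ⟨h1, h2⟩
    obtain ⟨hC1, U, V, W1, hX, hY⟩ := (mul_sub_mul_eq_iff_exists hA1 hB1).1 h1
    rw [mul_sub_mul_eq_iff_of_eq hY, ← hD1] at h2
    obtain ⟨hU, W4, W5, W6, hZ, hV⟩ := (mul_sub_mul_eq_iff_exists hA2 hD1d).1 h2
    rw [solvable_iff, mul_mul_eq_iff_exists hAd hBd] at hU
    obtain ⟨hAC, hCB, W2, W3, hU⟩ := hU
    exact ⟨⟨hC1, hAC, hCB⟩, W1, W2, W3, W4, W5, W6, U, V, hU, hV, hX, hY, hZ⟩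
  · rintro ⟨⟨hC1, hAC, hCB⟩, W1, W2, W3, W4, W5, W6, U, V, hU, hV, hX, hY, hZ⟩
    have hAUB : A * U * B = C := (mul_mul_eq_iff_exists hAd hBd).2 ⟨hAC, hCB, W2, W3, hU⟩
    refine ⟨(mul_sub_mul_eq_iff_exists hA1 hB1).2 ⟨hC1, U, V, W1, hX, hY⟩, ?_⟩
    rw [mul_sub_mul_eq_iff_of_eq hY, ← hD1]
    exact (mul_sub_mul_eq_iff_exists hA2 hD1d).2
      ⟨(solvable_iff U).2 hAUB, W4, W5, W6, hZ, hV⟩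

end GeneralizedInverse

theorem stmt_1 {m p1 p2 q n1 n2 : ℕ}
    (A1 : Mat m p1) (A1d : Mat p1 m) (hA1 : IsMPInv A1 A1d)
    (A2 : Mat m p2) (A2d : Mat p2 m) (hA2 : IsMPInv A2 A2d)
    (B1 : Mat q n1) (B1d : Mat n1 q) (hB1 : IsMPInv B1 B1d)
    (B2 : Mat q n2) (C1 : Mat m n1) (C2 : Mat m n2)
    (D1 : Mat q n2) (hD1 : D1 = Rp B1 B1d * B2)
    (D1d : Mat n2 q) (hD1d : IsMPInv D1 D1d)
    (A : Mat m p1) (hA : A = Rp A2 A2d * A1)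
    (Ad : Mat p1 m) (hAd : IsMPInv A Ad)
    (B : Mat q n2) (hB : B = B2 * Lp D1 D1d)
    (Bd : Mat n2 q) (hBd : IsMPInv B Bd)
    (C : Mat m n2)
    (hC : C = Rp A2 A2d * (Rp A1 A1d * C1 * B1d * B2 - C2) * Lp D1 D1d)
    (hcond1 : Rp A1 A1d * C1 * Lp B1 B1d = 0)
    (hcond2 : Rp A Ad * C = 0)
    (hcond3 : C * Lp B Bd = 0)
    (X : Mat p1 n1) (Y : Mat m q) (Z : Mat p2 n2) :
    (A1 * X - Y * B1 = C1 ∧ A2 * Z - Y * B2 = C2) ↔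
      (∃ (W1 : Mat p1 n1) (W2 : Mat p1 q) (W3 : Mat p1 q) (W4 : Mat p2 q)
          (W5 : Mat m q) (W6 : Mat p2 n2) (U1 : Mat p1 q) (V1 : Mat m q),
        U1 = Ad * C * Bd + Lp A Ad * W2 + W3 * Rp B Bd ∧
        V1 = -(Rp A2 A2d * (C2 - Rp A1 A1d * C1 * B1d * B2 + A1 * U1 * B2) * D1d)
              + A2 * W4 + W5 * Rp D1 D1d ∧
        X = A1d * C1 + U1 * B1 + Lp A1 A1d * W1 ∧
        Y = -(Rp A1 A1d * C1 * B1d) + A1 * U1 + V1 * Rp B1 B1d ∧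
        Z = A2d * (C2 - Rp A1 A1d * C1 * B1d * B2 + A1 * U1 * B2)
              + W4 * D1 + Lp A2 A2d * W6) :=
  (stmt_1_general hA1.isInnerInverse hA2.isInnerInverse hB1.isInnerInverse hD1 hD1d.isInnerInverse
    hA hAd.isInnerInverse hB hBd.isInnerInverse hC).trans
      (and_iff_right ⟨hcond1, hcond2, hcond3⟩)
end
end

section
/- Let A1 ∈ ℍ^{m×p1}, B1 ∈ ℍ^{q1×n}, C3 ∈ ℍ^{m×r3}, D3 ∈ ℍ^{s3×n}, C4 ∈ ℍ^{m×r4}, D4 ∈ ℍ^{s4×n}, E1 ∈ ℍ^{m×n} be quaternion matrices. Define A = R_{A1} C3, B = D3 L_{B1}, C = R_{A1} C4, D = D4 L_{B1}, E = R_{A1} E1 L_{B1}, M = R_A C, and N = D L_B. Then there exist quaternion matrices X1 ∈ ℍ^{p1×n}, X2 ∈ ℍ^{m×q1}, X3 ∈ ℍ^{r3×s3}, X4 ∈ ℍ^{r4×s4} satisfying A1 X1 + X2 B1 + C3 X3 D3 + C4 X4 D4 = E1 if and only if R_M R_A E = 0, E L_B L_N = 0, R_A E L_D = 0, and R_C E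 L_B = 0. -/
open Matrix

noncomputable section

/-!
`R_A * F = 0` says exactly that `F` is of the form `A * X`, and `F * L_B = 0` that it is of the form
`X * B`. The terms `A1 * X1 + X2 * B1` thus absorb exactly the matrices `F` with
`R_{A1} * F * L_{B1} = 0`, and what remains is to solve `A * X3 * B + C * X4 * D = E`. For a given
`X4 = Y` there is such an `X3` if and only if `R_A` and `L_B` kill `E - C * Y * D`, that is, if
`M * Y * D = R_A * E` and `C * Y * N = E * L_B`. Solutions `Y₁` and `Y₂` of these two equations
always combine into a common one, `Y₁ + (Y₂ - Y₁) * N * N⁺`: both yield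
`M * Y * N = R_A * E * L_B`, so the correction term is invisible to the first equation.
-/

/-- `A'` is an inner inverse (or `{1}`-inverse) of `A`: the first Penrose equation holds. -/
def IsInnerInv {R m p : Type*} [NonUnitalNonAssocSemiring R] [Fintype m] [Fintype p]
    (A : Matrix m p R) (A' : Matrix p m R) : Prop :=
  A * A' * A = A

/-- The matrix `1 - A * A'`, which is `R_A` when `A'` is the Moore–Penrose inverse of `A`. For an
inner inverse `A'` it is idempotent and its kernel is the column space of `A`. -/
def cokerProj {R m p : Type*} [Ring R] [Fintype p] [DecidableEq m]
    (A : Matrix m p R) (A' : Matrix p m R) : Matrix m m R :=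
  1 - A * A'

/-- The matrix `1 - B' * B`, which is `L_B` when `B'` is the Moore–Penrose inverse of `B`. For an
inner inverse `B'` it is idempotent and its range is the kernel of `B`. -/
def kerProj {R q n : Type*} [Ring R] [Fintype q] [DecidableEq n]
    (B : Matrix q n R) (B' : Matrix n q R) : Matrix n n R :=
  1 - B' * B

section OneTerm

variable {R m n p q k : Type*} [Ring R] [Fintype m] [Fintype n] [Fintype p] [Fintype q]
  [DecidableEq m] [DecidableEq n]
  {A : Matrix m p R} {A' : Matrix p m R} {B : Matrix q n R} {B' : Matrix n q R}

theorem IsInnerInv.cokerProj_mul_self (hA : IsInnerInv A A') : cokerProj A A' * A = 0 := by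
  rw [cokerProj, Matrix.sub_mul, Matrix.one_mul, hA, sub_self]

theorem IsInnerInv.mul_kerProj_self (hB : IsInnerInv B B') : B * kerProj B B' = 0 := by
  rw [kerProj, Matrix.mul_sub, Matrix.mul_one, ← Matrix.mul_assoc, hB, sub_self]

theorem mul_mul_add_cokerProj_mul (A : Matrix m p R) (A' : Matrix p m R)
    (F : Matrix m k R) : A * (A' * F) + cokerProj A A' * F = F := by
  rw [cokerProj, Matrix.sub_mul, Matrix.one_mul, Matrix.mul_assoc, add_sub_cancel]

theorem mul_mul_add_mul_kerProj (B : Matrix q n R) (B' : Matrix n q R)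
    (F : Matrix k n R) : F * B' * B + F * kerProj B B' = F := by
  rw [kerProj, Matrix.mul_sub, Matrix.mul_one, Matrix.mul_assoc, add_sub_cancel]

theorem IsInnerInv.exists_mul_mul_eq_iff (hA : IsInnerInv A A') (hB : IsInnerInv B B')
    {F : Matrix m n R} :
    (∃ X : Matrix p q R, A * X * B = F) ↔ cokerProj A A' * F = 0 ∧ F * kerProj B B' = 0 := by
  constructor
  · rintro ⟨X, rfl⟩
    constructor
    · rw [← Matrix.mul_assoc, ← Matrix.mul_assoc, hA.cokerProj_mul_self, Matrix.zero_mul,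
        Matrix.zero_mul]
    · rw [Matrix.mul_assoc, hB.mul_kerProj_self, Matrix.mul_zero]
  · rintro ⟨hRF, hFL⟩
    have hAF : A * (A' * F) = F := by simpa [hRF] using mul_mul_add_cokerProj_mul A A' F
    have hFB : F * B' * B = F := by simpa [hFL] using mul_mul_add_mul_kerProj B B' F
    exact ⟨A' * F * B', by rw [← Matrix.mul_assoc, hAF, hFB]⟩

theorem IsInnerInv.exists_mul_add_mul_eq_iff (hA : IsInnerInv A A') (hB : IsInnerInv B B')
    {F : Matrix m n R} :
    (∃ (X : Matrix p n R) (Y : Matrix m q R), A * X + Y * B = F) ↔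
      cokerProj A A' * F * kerProj B B' = 0 := by
  constructor
  · rintro ⟨X, Y, rfl⟩
    rw [Matrix.mul_add, ← Matrix.mul_assoc, hA.cokerProj_mul_self, Matrix.zero_mul, zero_add,
      Matrix.mul_assoc, Matrix.mul_assoc, hB.mul_kerProj_self, Matrix.mul_zero, Matrix.mul_zero]
  · intro hF
    have hRFB : cokerProj A A' * F * B' * B = cokerProj A A' * F := by
      simpa [hF] using mul_mul_add_mul_kerProj B B' (cokerProj A A' * F)
    exact ⟨A' * F, cokerProj A A' * F * B', by rw [hRFB, mul_mul_add_cokerProj_mul]⟩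

theorem IsInnerInv.exists_mul_add_mul_add_eq_iff (hA : IsInnerInv A A') (hB : IsInnerInv B B')
    {F G : Matrix m n R} :
    (∃ (X : Matrix p n R) (Y : Matrix m q R), A * X + Y * B + G = F) ↔
      cokerProj A A' * G * kerProj B B' = cokerProj A A' * F * kerProj B B' := by
  calc (∃ (X : Matrix p n R) (Y : Matrix m q R), A * X + Y * B + G = F)
      ↔ ∃ (X : Matrix p n R) (Y : Matrix m q R), A * X + Y * B = F - G := by
        simp only [eq_sub_iff_add_eq]
    _ ↔ cokerProj A A' * (F - G) * kerProj B B' = 0 := hA.exists_mul_add_mul_eq_iff hB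
    _ ↔ cokerProj A A' * G * kerProj B B' = cokerProj A A' * F * kerProj B B' := by
        rw [Matrix.mul_sub, Matrix.sub_mul, sub_eq_zero, eq_comm]

end OneTerm

theorem IsInnerInv.exists_common_solution_iff {R a b m n r s : Type*} [NonUnitalRing R]
    [Fintype b] [Fintype m] [Fintype n] [Fintype r] [Fintype s]
    {P : Matrix a m R} {C : Matrix m r R} {D : Matrix s n R} {Q : Matrix n b R}
    {N' : Matrix b s R} (hN : IsInnerInv (D * Q) N')
    {F : Matrix a n R} {G : Matrix m b R} (hFG : F * Q = P * G) :
    (∃ Y : Matrix r s R, P * C * Y * D = F ∧ C * Y * (D * Q) = G) ↔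
      (∃ Y : Matrix r s R, P * C * Y * D = F) ∧ ∃ Y : Matrix r s R, C * Y * (D * Q) = G := by
  refine ⟨fun ⟨Y, hF, hG⟩ ↦ ⟨⟨Y, hF⟩, Y, hG⟩, ?_⟩
  rintro ⟨⟨Y₁, hY₁⟩, Y₂, hY₂⟩
  have hdiff : P * C * (Y₂ - Y₁) * (D * Q) = 0 := by
    calc P * C * (Y₂ - Y₁) * (D * Q)
        = P * (C * Y₂ * (D * Q)) - P * C * Y₁ * D * Q := by
          simp only [Matrix.mul_sub, Matrix.sub_mul, Matrix.mul_assoc]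
      _ = 0 := by rw [hY₁, hY₂, hFG, sub_self]
  refine ⟨Y₁ + (Y₂ - Y₁) * (D * Q) * N', ?_, ?_⟩
  · calc P * C * (Y₁ + (Y₂ - Y₁) * (D * Q) * N') * D
        = P * C * Y₁ * D + P * C * (Y₂ - Y₁) * (D * Q) * N' * D := by
          simp only [Matrix.mul_add, Matrix.add_mul, Matrix.mul_assoc]
      _ = F := by rw [hdiff, Matrix.zero_mul, Matrix.zero_mul, add_zero, hY₁]
  · calc C * (Y₁ + (Y₂ - Y₁) * (D * Q) * N') * (D * Q)
        = C * Y₁ * (D * Q) + C * (Y₂ - Y₁) * (D * Q * N' * (D * Q)) := by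
          simp only [Matrix.mul_add, Matrix.add_mul, Matrix.mul_assoc]
      _ = C * Y₂ * (D * Q) := by
          rw [hN, Matrix.mul_sub, Matrix.sub_mul, add_sub_cancel]
      _ = G := hY₂

section TwoTerm

variable {R m n r s r' s' : Type*} [Ring R] [Fintype m] [Fintype n] [Fintype r] [Fintype s]
  [Fintype r'] [Fintype s'] [DecidableEq m] [DecidableEq n]
  {A : Matrix m r R} {A' : Matrix r m R} {B : Matrix s n R} {B' : Matrix n s R}
  {C : Matrix m r' R} {C' : Matrix r' m R} {D : Matrix s' n R} {D' : Matrix n s' R}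
  {E : Matrix m n R}

theorem IsInnerInv.exists_mul_mul_add_eq_iff (hA : IsInnerInv A A') (hB : IsInnerInv B B')
    {Y : Matrix r' s' R} :
    (∃ X : Matrix r s R, A * X * B + C * Y * D = E) ↔
      cokerProj A A' * C * Y * D = cokerProj A A' * E ∧
        C * Y * (D * kerProj B B') = E * kerProj B B' := by
  calc (∃ X : Matrix r s R, A * X * B + C * Y * D = E)
      ↔ ∃ X : Matrix r s R, A * X * B = E - C * Y * D := by simp only [eq_sub_iff_add_eq]
    _ ↔ cokerProj A A' * (E - C * Y * D) = 0 ∧ (E - C * Y * D) * kerProj B B' = 0 :=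
        hA.exists_mul_mul_eq_iff hB
    _ ↔ cokerProj A A' * C * Y * D = cokerProj A A' * E ∧
          C * Y * (D * kerProj B B') = E * kerProj B B' := by
        rw [Matrix.mul_sub, Matrix.sub_mul, sub_eq_zero, sub_eq_zero,
          eq_comm (a := cokerProj A A' * E), eq_comm (a := E * kerProj B B')]
        simp only [Matrix.mul_assoc]

theorem IsInnerInv.exists_mul_mul_add_mul_mul_eq_iff
    {M' : Matrix r' m R} {N' : Matrix n s' R}
    (hA : IsInnerInv A A') (hB : IsInnerInv B B') (hC : IsInnerInv C C') (hD : IsInnerInv D D')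
    (hM : IsInnerInv (cokerProj A A' * C) M') (hN : IsInnerInv (D * kerProj B B') N') :
    (∃ (X : Matrix r s R) (Y : Matrix r' s' R), A * X * B + C * Y * D = E) ↔
      cokerProj (cokerProj A A' * C) M' * cokerProj A A' * E = 0 ∧
        E * kerProj B B' * kerProj (D * kerProj B B') N' = 0 ∧
        cokerProj A A' * E * kerProj D D' = 0 ∧ cokerProj C C' * E * kerProj B B' = 0 := by
  rw [exists_comm]
  simp only [hA.exists_mul_mul_add_eq_iff hB]
  rw [hN.exists_common_solution_iff (Matrix.mul_assoc _ _ _), hM.exists_mul_mul_eq_iff hD,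
    hC.exists_mul_mul_eq_iff hN, Matrix.mul_assoc _ (cokerProj A A') E,
    Matrix.mul_assoc (cokerProj C C') E]
  tauto

end TwoTerm

theorem stmt_6_general {R m p₁ q₁ n r₃ s₃ r₄ s₄ : Type*} [Ring R] [Fintype m] [Fintype p₁]
    [Fintype q₁] [Fintype n] [Fintype r₃] [Fintype s₃] [Fintype r₄] [Fintype s₄]
    [DecidableEq m] [DecidableEq n]
    {A₁ : Matrix m p₁ R} {A₁' : Matrix p₁ m R} (hA₁ : IsInnerInv A₁ A₁')
    {B₁ : Matrix q₁ n R} {B₁' : Matrix n q₁ R} (hB₁ : IsInnerInv B₁ B₁')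
    (C₃ : Matrix m r₃ R) (D₃ : Matrix s₃ n R) (C₄ : Matrix m r₄ R) (D₄ : Matrix s₄ n R)
    (E₁ : Matrix m n R)
    {A : Matrix m r₃ R} (hA : A = cokerProj A₁ A₁' * C₃)
    {A' : Matrix r₃ m R} (hA' : IsInnerInv A A')
    {B : Matrix s₃ n R} (hB : B = D₃ * kerProj B₁ B₁')
    {B' : Matrix n s₃ R} (hB' : IsInnerInv B B')
    {C : Matrix m r₄ R} (hC : C = cokerProj A₁ A₁' * C₄)
    {C' : Matrix r₄ m R} (hC' : IsInnerInv C C')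
    {D : Matrix s₄ n R} (hD : D = D₄ * kerProj B₁ B₁')
    {D' : Matrix n s₄ R} (hD' : IsInnerInv D D')
    {E : Matrix m n R} (hE : E = cokerProj A₁ A₁' * E₁ * kerProj B₁ B₁')
    {M : Matrix m r₄ R} (hM : M = cokerProj A A' * C)
    {M' : Matrix r₄ m R} (hM' : IsInnerInv M M')
    {N : Matrix s₄ n R} (hN : N = D * kerProj B B')
    {N' : Matrix n s₄ R} (hN' : IsInnerInv N N') :
    (∃ (X₁ : Matrix p₁ n R) (X₂ : Matrix m q₁ R) (X₃ : Matrix r₃ s₃ R) (X₄ : Matrix r₄ s₄ R),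
        A₁ * X₁ + X₂ * B₁ + C₃ * X₃ * D₃ + C₄ * X₄ * D₄ = E₁) ↔
      (cokerProj M M' * cokerProj A A' * E = 0 ∧ E * kerProj B B' * kerProj N N' = 0 ∧
        cokerProj A A' * E * kerProj D D' = 0 ∧ cokerProj C C' * E * kerProj B B' = 0) := by
  subst hM hN
  rw [← hA'.exists_mul_mul_add_mul_mul_eq_iff hB' hC' hD' hM' hN']
  have hreduce (X₃ : Matrix r₃ s₃ R) (X₄ : Matrix r₄ s₄ R) :
      (∃ (X₁ : Matrix p₁ n R) (X₂ : Matrix m q₁ R),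
          A₁ * X₁ + X₂ * B₁ + C₃ * X₃ * D₃ + C₄ * X₄ * D₄ = E₁) ↔
        A * X₃ * B + C * X₄ * D = E := by
    simp only [add_assoc _ (C₃ * X₃ * D₃)]
    rw [hA₁.exists_mul_add_mul_add_eq_iff hB₁, hA, hB, hC, hD, hE]
    simp only [Matrix.mul_add, Matrix.add_mul, Matrix.mul_assoc]
  simp only [← hreduce]
  exact ⟨fun ⟨X₁, X₂, X₃, X₄, h⟩ ↦ ⟨X₃, X₄, X₁, X₂, h⟩,
    fun ⟨X₃, X₄, X₁, X₂, h⟩ ↦ ⟨X₁, X₂, X₃, X₄, h⟩⟩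

theorem stmt_6 {m p1 q1 n r3 s3 r4 s4 : ℕ}
    (A1 : Mat m p1) (A1d : Mat p1 m) (hA1 : IsMPInv A1 A1d)
    (B1 : Mat q1 n) (B1d : Mat n q1) (hB1 : IsMPInv B1 B1d)
    (C3 : Mat m r3) (D3 : Mat s3 n) (C4 : Mat m r4) (D4 : Mat s4 n)
    (E1 : Mat m n)
    (A : Mat m r3) (hA : A = Rp A1 A1d * C3)
    (Ad : Mat r3 m) (hAd : IsMPInv A Ad)
    (B : Mat s3 n) (hB : B = D3 * Lp B1 B1d)
    (Bd : Mat n s3) (hBd : IsMPInv B Bd)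
    (C : Mat m r4) (hC : C = Rp A1 A1d * C4)
    (Cd : Mat r4 m) (hCd : IsMPInv C Cd)
    (D : Mat s4 n) (hD : D = D4 * Lp B1 B1d)
    (Dd : Mat n s4) (hDd : IsMPInv D Dd)
    (E : Mat m n) (hE : E = Rp A1 A1d * E1 * Lp B1 B1d)
    (M : Mat m r4) (hM : M = Rp A Ad * C)
    (Md : Mat r4 m) (hMd : IsMPInv M Md)
    (N : Mat s4 n) (hN : N = D * Lp B Bd)
    (Nd : Mat n s4) (hNd : IsMPInv N Nd) :
    (∃ (X1 : Mat p1 n) (X2 : Mat m q1) (X3 : Mat r3 s3) (X4 : Mat r4 s4),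
        A1 * X1 + X2 * B1 + C3 * X3 * D3 + C4 * X4 * D4 = E1) ↔
      (Rp M Md * Rp A Ad * E = 0 ∧ E * Lp B Bd * Lp N Nd = 0 ∧
        Rp A Ad * E * Lp D Dd = 0 ∧ Rp C Cd * E * Lp B Bd = 0) :=
  stmt_6_general hA1.1 hB1.1 C3 D3 C4 D4 E1 hA hAd.1 hB hBd.1 hC hCd.1 hD hDd.1 hE hM hMd.1
    hN hNd.1
end
end
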